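/- Fix m ∈ ℕ and α_0, …, α_m ≥ 0 with α_0 > 0, and let n > m + 1. Let x : [0,1] → ℝ be a continuous function with s_{n−m−1}(x) > 0, and define: the sequential scale estimate H^s_n(x) := Ĥ_n(λ^s_n x) where λ^s_n is the unique minimizer over λ > 0 of Σ_{k=n−m}^{n} α_{n−k}(Ĥ_k(λx) − Ĥ_{k−1}(λx))²; the terminal scale estimate H^t_n(x) := Ĥ_n(λ^t_n x) where λ^t_n is the unique minimizer over λ > 0 of Σ_{k=n−m}^{n} α_{n−k}(Ĥ_n(λx) − Ĥ_{k−1}(λx))²; and, assuming additionally Σ_{k=0}^m α_k = 1 and α_j > 0 for at least two distinct indices j, the regression scale estimate H^r_n(x) given by the unique minimizer (h, λ) over ℝ × (0,∞) of Σ_{k=0}^{m} α_k((n−k)(Ĥ_{n−k}(x) − h) − log₂ λ)², with H^r_n(x) := h. Then all three estimators are scale-invariant: for every λ ≠ 0, H^s_n(λx) = H^s_n(x), H^t_n(λx) = H^t_n(x), and H^r_n(λx) = H^r_n(x). -/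

import Mathlib

/-!
In logarithmic coordinates `L = log₂ λ` each of the three objectives is a weighted sum of squares
of residuals that are affine in the parameters (`L`, respectively `(h, L)`), because
`Ĥ_k(λ x) = Ĥ_k(x) - (log₂ |λ|) / k` (`Hhat_smul`). Replacing `x` by `c x` only shifts `L` by
`log₂ |c|`, so the families of attainable residual vectors for `x` and for `c x` coincide.

Given a minimizer for `x` and one for `c x`, the midpoint of their residual vectors is therefore
attainable in both problems. By the parallelogram identity the two residual vectors agree at each
index of positive weight (`residual_eq_of_le_midpoint`). For the sequential and terminal estimates
the index `k = n`, of weight `α 0 > 0`, then determines `log₂ |λ|`; for the regression estimate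
two indices of positive weight determine the slope `h`.
-/

open Filter Finset

noncomputable section

/-- Faber–Schauder coefficient `θ_{m,k}` of `x`. -/
def fsCoeff (x : ℝ → ℝ) (m k : ℕ) : ℝ :=
  2 ^ ((m : ℝ) / 2) *
    (2 * x ((2 * (k : ℝ) + 1) / 2 ^ (m + 1)) - x ((k : ℝ) / 2 ^ m) - x (((k : ℝ) + 1) / 2 ^ m))

/-- `s_n = (∑_{m<n} ∑_{k<2^m} θ_{m,k}²)^{1/2}`. -/
def sSeq (x : ℝ → ℝ) (n : ℕ) : ℝ :=
  Real.sqrt (∑ m ∈ Finset.range n, ∑ k ∈ Finset.range (2 ^ m), fsCoeff x m k ^ 2)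

/-- The Gladyshev estimate `Ĥ_n(x) = 1 - (1/n) log₂ s_n(x)`. -/
def Hhat (x : ℝ → ℝ) (n : ℕ) : ℝ := 1 - Real.logb 2 (sSeq x n) / n

/-- The objective function for the sequential scaling factor:
`λ ↦ ∑_{k=n-m}^n α_{n-k} (Ĥ_k(λx) - Ĥ_{k-1}(λx))²`. -/
def seqObj (m : ℕ) (α : ℕ → ℝ) (n : ℕ) (x : ℝ → ℝ) (lam : ℝ) : ℝ :=
  ∑ k ∈ Finset.Icc (n - m) n,
    α (n - k) * (Hhat (fun t => lam * x t) k - Hhat (fun t => lam * x t) (k - 1)) ^ 2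

/-- The objective function for the terminal scaling factor:
`λ ↦ ∑_{k=n-m}^n α_{n-k} (Ĥ_n(λx) - Ĥ_{k-1}(λx))²`. -/
def terObj (m : ℕ) (α : ℕ → ℝ) (n : ℕ) (x : ℝ → ℝ) (lam : ℝ) : ℝ :=
  ∑ k ∈ Finset.Icc (n - m) n,
    α (n - k) * (Hhat (fun t => lam * x t) n - Hhat (fun t => lam * x t) (k - 1)) ^ 2

/-- The objective function for the regression scale estimate:
`(h,λ) ↦ ∑_{k=0}^m α_k ((n-k)(Ĥ_{n-k}(x) - h) - log₂ λ)²`. -/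
def regObj (m : ℕ) (α : ℕ → ℝ) (n : ℕ) (x : ℝ → ℝ) (h lam : ℝ) : ℝ :=
  ∑ k ∈ Finset.range (m + 1),
    α k * (((n : ℝ) - (k : ℝ)) * (Hhat x (n - k) - h) - Real.logb 2 lam) ^ 2

lemma sSeq_smul (x : ℝ → ℝ) (a : ℝ) (n : ℕ) :
    sSeq (fun t => a * x t) n = |a| * sSeq x n := by
  unfold sSeq
  rw [← Real.sqrt_sq_eq_abs, ← Real.sqrt_mul (sq_nonneg a), Finset.mul_sum]
  congr 1
  refine Finset.sum_congr rfl fun m _ => ?_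
  rw [Finset.mul_sum]
  refine Finset.sum_congr rfl fun k _ => ?_
  unfold fsCoeff
  ring

lemma sSeq_mono (x : ℝ → ℝ) : Monotone (sSeq x) := by
  intro p q hpq
  unfold sSeq
  apply Real.sqrt_le_sqrt
  refine Finset.sum_le_sum_of_subset_of_nonneg (Finset.range_mono hpq) fun m _ _ => ?_
  exact Finset.sum_nonneg fun k _ => sq_nonneg _

/-- No absolute value is needed around `a`, since `Real.logb 2 a = Real.logb 2 |a|`. -/
lemma Hhat_smul {x : ℝ → ℝ} {a : ℝ} {k : ℕ} (ha : a ≠ 0) (hk : 0 < sSeq x k) :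
    Hhat (fun t => a * x t) k = Hhat x k - Real.logb 2 a / k := by
  unfold Hhat
  rw [sSeq_smul, Real.logb_mul (abs_ne_zero.mpr ha) hk.ne', Real.logb_abs]
  ring

lemma Hhat_smul_smul {x : ℝ → ℝ} {a c : ℝ} {k : ℕ} (ha : a ≠ 0) (hc : c ≠ 0)
    (hk : 0 < sSeq x k) :
    Hhat (fun t => a * (c * x t)) k = Hhat x k - (Real.logb 2 a + Real.logb 2 c) / k := by
  rw [← Real.logb_mul ha hc, ← Hhat_smul (mul_ne_zero ha hc) hk]
  simp only [mul_assoc]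

lemma logb_two_rpow (t : ℝ) : Real.logb 2 ((2 : ℝ) ^ t) = t :=
  Real.logb_rpow (by norm_num) (by norm_num)

/-- Strict convexity of a weighted sum of squares: if neither of two residual vectors is improved
by passing to their midpoint, they agree wherever the weight is positive. -/
lemma residual_eq_of_le_midpoint {s : Finset ℕ} {w u v : ℕ → ℝ} (hw : ∀ i ∈ s, 0 ≤ w i)
    (hu : ∑ i ∈ s, w i * u i ^ 2 ≤ ∑ i ∈ s, w i * ((u i + v i) / 2) ^ 2)
    (hv : ∑ i ∈ s, w i * v i ^ 2 ≤ ∑ i ∈ s, w i * ((u i + v i) / 2) ^ 2)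
    {i : ℕ} (hi : i ∈ s) (hwi : 0 < w i) : u i = v i := by
  have hpar : ∑ i ∈ s, w i * (u i - v i) ^ 2 =
      2 * ∑ i ∈ s, w i * u i ^ 2 + 2 * ∑ i ∈ s, w i * v i ^ 2
        - 4 * ∑ i ∈ s, w i * ((u i + v i) / 2) ^ 2 := by
    simp only [Finset.mul_sum, ← Finset.sum_add_distrib, ← Finset.sum_sub_distrib]
    exact Finset.sum_congr rfl fun i _ => by ring
  have hle : w i * (u i - v i) ^ 2 ≤ ∑ i ∈ s, w i * (u i - v i) ^ 2 :=
    Finset.single_le_sum (f := fun i => w i * (u i - v i) ^ 2)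
      (fun j hj => mul_nonneg (hw j hj) (sq_nonneg _)) hi
  have hsq : (u i - v i) ^ 2 ≤ 0 := by
    by_contra! h
    have := mul_pos hwi h
    linarith
  have := pow_eq_zero_iff (two_ne_zero) |>.mp (le_antisymm hsq (sq_nonneg (u i - v i)))
  linarith

theorem stmt18 (m : ℕ) (α : ℕ → ℝ) (hα : ∀ k : ℕ, k ≤ m → 0 ≤ α k) (hα0 : 0 < α 0)
    (hsum : ∑ k ∈ Finset.range (m + 1), α k = 1)
    (htwo : ∃ i j : ℕ, i ≤ m ∧ j ≤ m ∧ i ≠ j ∧ 0 < α i ∧ 0 < α j)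
    (n : ℕ) (hn : m + 1 < n)
    (x : ℝ → ℝ) (hx : ContinuousOn x (Set.Icc 0 1))
    (hs : 0 < sSeq x (n - m - 1))
    (c : ℝ) (hc : c ≠ 0)
    (lamS lamS' lamT lamT' : ℝ) (hR hR' lamR lamR' : ℝ)
    (hSmin : 0 < lamS ∧ ∀ μ : ℝ, 0 < μ → seqObj m α n x lamS ≤ seqObj m α n x μ)
    (hSmin' : 0 < lamS' ∧ ∀ μ : ℝ, 0 < μ →
      seqObj m α n (fun t => c * x t) lamS' ≤ seqObj m α n (fun t => c * x t) μ)
    (hTmin : 0 < lamT ∧ ∀ μ : ℝ, 0 < μ → terObj m α n x lamT ≤ terObj m α n x μ)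
    (hTmin' : 0 < lamT' ∧ ∀ μ : ℝ, 0 < μ →
      terObj m α n (fun t => c * x t) lamT' ≤ terObj m α n (fun t => c * x t) μ)
    (hRmin : 0 < lamR ∧ ∀ h μ : ℝ, 0 < μ → regObj m α n x hR lamR ≤ regObj m α n x h μ)
    (hRmin' : 0 < lamR' ∧ ∀ h μ : ℝ, 0 < μ →
      regObj m α n (fun t => c * x t) hR' lamR' ≤ regObj m α n (fun t => c * x t) h μ) :
    Hhat (fun t => lamS * x t) n = Hhat (fun t => lamS' * (c * x t)) n ∧
    Hhat (fun t => lamT * x t) n = Hhat (fun t => lamT' * (c * x t)) n ∧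
    hR = hR' := by
  have hpos : ∀ k, n - m - 1 ≤ k → 0 < sSeq x k := fun k hk => hs.trans_le (sSeq_mono x hk)
  obtain ⟨hS0, hS⟩ := hSmin
  obtain ⟨hS0', hS'⟩ := hSmin'
  obtain ⟨hT0, hT⟩ := hTmin
  obtain ⟨hT0', hT'⟩ := hTmin'
  obtain ⟨hR0, hRm⟩ := hRmin
  obtain ⟨hR0', hRm'⟩ := hRmin'
  have hw : ∀ k ∈ Finset.Icc (n - m) n, 0 ≤ α (n - k) := fun k hk => by
    rw [Finset.mem_Icc] at hk
    exact hα _ (by omega)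
  have hnmem : n ∈ Finset.Icc (n - m) n := Finset.mem_Icc.mpr ⟨by omega, le_rfl⟩
  have hnn : 0 < sSeq x n := hpos n (by omega)
  have hn1 : 0 < sSeq x (n - 1) := hpos _ (by omega)
  have hwn : 0 < α (n - n) := by simpa using hα0
  have hn0 : (0 : ℝ) < n := by exact_mod_cast (by omega : 0 < n)
  have hn0' : (0 : ℝ) < (n : ℝ) - 1 := by
    have : (1 : ℝ) < n := by exact_mod_cast (by omega : 1 < n)
    linarith
  have hcast : ((n - 1 : ℕ) : ℝ) = (n : ℝ) - 1 := by
    rw [Nat.cast_sub (by omega)]; simp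
  have hpow : ∀ t : ℝ, (0 : ℝ) < 2 ^ t := fun t => Real.rpow_pos_of_pos two_pos t
  refine ⟨?_, ?_, ?_⟩
  · -- The midpoint residuals come from the geometric mean of `lamS` and `lamS' * |c|`, taken as
    -- a factor of `x`; as a factor of `c * x` this mean is divided by `|c|`.
    set t := (Real.logb 2 lamS + (Real.logb 2 lamS' + Real.logb 2 c)) / 2 with ht
    have h := residual_eq_of_le_midpoint hw
      (u := fun k => Hhat (fun t => lamS * x t) k - Hhat (fun t => lamS * x t) (k - 1))
      (v := fun k => Hhat (fun t => lamS' * (c * x t)) k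
        - Hhat (fun t => lamS' * (c * x t)) (k - 1))
      ((hS _ (hpow t)).trans_eq ?_) ((hS' _ (hpow (t - Real.logb 2 c))).trans_eq ?_) hnmem hwn
    · simp only [Hhat_smul hS0.ne' hnn, Hhat_smul hS0.ne' hn1, Hhat_smul_smul hS0'.ne' hc hnn,
        Hhat_smul_smul hS0'.ne' hc hn1, hcast] at h ⊢
      -- The coefficient `1 / (n - 1) - 1 / n` of `log₂ λ` in the last residual is nonzero.
      have hL : Real.logb 2 lamS = Real.logb 2 lamS' + Real.logb 2 c := by
        field_simp at h
        linarith
      rw [hL]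
    · refine Finset.sum_congr rfl fun k hk => ?_
      rw [Finset.mem_Icc] at hk
      have hk0 := hpos k (by omega)
      have hk1 := hpos (k - 1) (by omega)
      simp only [Hhat_smul hS0.ne' hk0, Hhat_smul hS0.ne' hk1, Hhat_smul_smul hS0'.ne' hc hk0,
        Hhat_smul_smul hS0'.ne' hc hk1, Hhat_smul (hpow t).ne' hk0, Hhat_smul (hpow t).ne' hk1,
        logb_two_rpow]
      rw [ht]
      ring
    · refine Finset.sum_congr rfl fun k hk => ?_
      rw [Finset.mem_Icc] at hk
      have hk0 := hpos k (by omega)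
      have hk1 := hpos (k - 1) (by omega)
      simp only [Hhat_smul hS0.ne' hk0, Hhat_smul hS0.ne' hk1, Hhat_smul_smul hS0'.ne' hc hk0,
        Hhat_smul_smul hS0'.ne' hc hk1, Hhat_smul_smul (hpow (t - Real.logb 2 c)).ne' hc hk0,
        Hhat_smul_smul (hpow (t - Real.logb 2 c)).ne' hc hk1, logb_two_rpow]
      rw [ht]
      ring
  · set t := (Real.logb 2 lamT + (Real.logb 2 lamT' + Real.logb 2 c)) / 2 with ht
    have h := residual_eq_of_le_midpoint hw
      (u := fun k => Hhat (fun t => lamT * x t) n - Hhat (fun t => lamT * x t) (k - 1))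
      (v := fun k => Hhat (fun t => lamT' * (c * x t)) n
        - Hhat (fun t => lamT' * (c * x t)) (k - 1))
      ((hT _ (hpow t)).trans_eq ?_) ((hT' _ (hpow (t - Real.logb 2 c))).trans_eq ?_) hnmem hwn
    · simp only [Hhat_smul hT0.ne' hnn, Hhat_smul hT0.ne' hn1, Hhat_smul_smul hT0'.ne' hc hnn,
        Hhat_smul_smul hT0'.ne' hc hn1, hcast] at h ⊢
      have hL : Real.logb 2 lamT = Real.logb 2 lamT' + Real.logb 2 c := by
        field_simp at h
        linarith
      rw [hL]
    · refine Finset.sum_congr rfl fun k hk => ?_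
      rw [Finset.mem_Icc] at hk
      have hk1 := hpos (k - 1) (by omega)
      simp only [Hhat_smul hT0.ne' hnn, Hhat_smul hT0.ne' hk1, Hhat_smul_smul hT0'.ne' hc hnn,
        Hhat_smul_smul hT0'.ne' hc hk1, Hhat_smul (hpow t).ne' hnn, Hhat_smul (hpow t).ne' hk1,
        logb_two_rpow]
      rw [ht]
      ring
    · refine Finset.sum_congr rfl fun k hk => ?_
      rw [Finset.mem_Icc] at hk
      have hk1 := hpos (k - 1) (by omega)
      simp only [Hhat_smul hT0.ne' hnn, Hhat_smul hT0.ne' hk1, Hhat_smul_smul hT0'.ne' hc hnn,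
        Hhat_smul_smul hT0'.ne' hc hk1, Hhat_smul_smul (hpow (t - Real.logb 2 c)).ne' hc hnn,
        Hhat_smul_smul (hpow (t - Real.logb 2 c)).ne' hc hk1, logb_two_rpow]
      rw [ht]
      ring
  · obtain ⟨i, j, hi, hj, hij, hαi, hαj⟩ := htwo
    set t := (Real.logb 2 lamR + (Real.logb 2 lamR' + Real.logb 2 c)) / 2 with ht
    have hw' : ∀ k ∈ Finset.range (m + 1), 0 ≤ α k := fun k hk => by
      rw [Finset.mem_range] at hk
      exact hα k (by omega)
    have hscale : ∀ k ≤ m, Hhat (fun t => c * x t) (n - k)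
        = Hhat x (n - k) - Real.logb 2 c / ((n : ℝ) - k) := fun k hk => by
      rw [Hhat_smul hc (hpos _ (by omega)), Nat.cast_sub (by omega)]
    have hnk : ∀ k ≤ m, (n : ℝ) - k ≠ 0 := fun k hk => by
      have : (k : ℝ) < n := by exact_mod_cast (by omega : k < n)
      exact (sub_pos.mpr this).ne'
    have h : ∀ k ≤ m, 0 < α k →
        ((n : ℝ) - k) * (Hhat x (n - k) - hR) - Real.logb 2 lamR =
        ((n : ℝ) - k) * (Hhat (fun t => c * x t) (n - k) - hR') - Real.logb 2 lamR' := by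
      intro k hk hαk
      refine residual_eq_of_le_midpoint hw'
        (u := fun k => ((n : ℝ) - k) * (Hhat x (n - k) - hR) - Real.logb 2 lamR)
        (v := fun k => ((n : ℝ) - k) * (Hhat (fun t => c * x t) (n - k) - hR')
          - Real.logb 2 lamR')
        ((hRm ((hR + hR') / 2) _ (hpow t)).trans_eq ?_)
        ((hRm' ((hR + hR') / 2) _ (hpow (t - Real.logb 2 c))).trans_eq ?_)
        (Finset.mem_range.mpr (by omega)) hαk
      all_goals
        refine Finset.sum_congr rfl fun k hk => ?_
        have hk' : k ≤ m := by
          rw [Finset.mem_range] at hk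
          omega
        have := hnk k hk'
        simp only [hscale k hk', logb_two_rpow, ht]
        field_simp
        ring
    have h1 := h i hi hαi
    have h2 := h j hj hαj
    rw [hscale i hi, mul_sub, mul_sub _ (_ - _), mul_sub _ _ (_ / _),
      mul_div_cancel₀ _ (hnk i hi)] at h1
    rw [hscale j hj, mul_sub, mul_sub _ (_ - _), mul_sub _ _ (_ / _),
      mul_div_cancel₀ _ (hnk j hj)] at h2
    -- Subtracting the two residual equations leaves `(i - j) * (hR - hR') = 0`.
    have hprod : ((i : ℝ) - j) * (hR - hR') = 0 := by linarith
    have hne : (i : ℝ) - j ≠ 0 := sub_ne_zero.mpr (by exact_mod_cast hij)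
    exact sub_eq_zero.mp ((mul_eq_zero.mp hprod).resolve_left hne)
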